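/- Let n be a positive integer and p ≥ 3 a prime number. If p ∣ n and n is even, then τ(U_n · U_{n+p} · U_{n+2p}) = (n(n+p)(n+2p)/(2p²)) · (U_p² · V_p / gcd(V_p, (n+p)/p)). -/

import Mathlib

/-- The first Lucas sequence with parameters `(a, b)`:
`U 0 = 0`, `U 1 = 1`, `U (k+2) = a * U (k+1) + b * U k`. -/
def U (a b : ℤ) : ℕ → ℤ
  | 0 => 0
  | 1 => 1
  | (k + 2) => a * U a b (k + 1) + b * U a b k

/-- The second Lucas sequence with parameters `(a, b)`:
`V 0 = 2`, `V 1 = a`, `V (k+2) = a * V (k+1) + b * V k`. -/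
def V (a b : ℤ) : ℕ → ℤ
  | 0 => 2
  | 1 => a
  | (k + 2) => a * V a b (k + 1) + b * V a b k

/-- The order of appearance of `m` in the first Lucas sequence with parameters `(a, b)`:
the smallest positive integer `k` such that `m ∣ U a b k`. -/
noncomputable def tau (a b : ℤ) (m : ℤ) : ℕ :=
  sInf {k : ℕ | 0 < k ∧ m ∣ U a b k}

/-- The pair `(a, b)` is nondegenerate: `b ≠ 0` and
`(a, b) ∉ {(±2, -1), (±1, -1), (0, ±1), (±1, 0)}`. -/
def Nondegenerate (a b : ℤ) : Prop :=
  b ≠ 0 ∧ (a, b) ∉ ({(2, -1), (-2, -1), (1, -1), (-1, -1),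
    (0, 1), (0, -1), (1, 0), (-1, 0)} : Set (ℤ × ℤ))

/-!
Primes dividing `U_d` obey the law of repetition `v_q (U_{dk}) = v_q (U_d) + v_q k` (with a parity
proviso at `q = 2`), which comes from expanding `M ^ (dk) = (U_d M + c) ^ k` for the companion
matrix `M`. Put `n = 2ph`. Since `U` is a strong divisibility sequence, the pairwise gcds of
`U_n`, `U_{n+p}`, `U_{n+2p}` are `U_p`, `U_p` and `U_{2p} = U_p V_p`, so their product is
`U_p² V_p` times their least common multiple. With `L = 2ph(h+1)(2h+1)`, the least common multiple
of the three indices, the law of repetition turns this into: the product divides `U_{Ls}` iff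
`U_p² V_p ∣ gcd(V_p, 2h+1) s`. Every index at which the product occurs is a multiple of `L`.
-/

/-- The companion matrix of `X² - a X - b`, whose powers contain the first Lucas sequence. -/
def companion (a b : ℤ) : Matrix (Fin 2) (Fin 2) ℤ := !![a, b; 1, 0]

lemma companion_pow (a b : ℤ) (k : ℕ) :
    companion a b ^ k =
      !![U a b (k + 1), b * U a b k; U a b k, U a b (k + 1) - a * U a b k] := by
  induction k with
  | zero => simp [U, Matrix.one_fin_two]
  | succ k ih =>
    rw [pow_succ', ih, companion, Matrix.mul_fin_two]
    simp only [U]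
    congr! 3 <;> ring_nf

lemma U_eq_companion_pow (a b : ℤ) (k : ℕ) : U a b k = (companion a b ^ k) 1 0 := by
  simp [companion_pow]

lemma companion_pow_eq_smul_add (a b : ℤ) (k : ℕ) :
    companion a b ^ k = U a b k • companion a b + (U a b (k + 1) - a * U a b k) • 1 := by
  rw [companion_pow, companion, Matrix.one_fin_two]
  simp [mul_comm]

lemma U_add (a b : ℤ) (i j : ℕ) :
    U a b (i + j) = U a b i * (U a b (j + 1) - a * U a b j) + U a b (i + 1) * U a b j := by
  rw [U_eq_companion_pow, pow_add, companion_pow, companion_pow, Matrix.mul_fin_two]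
  simp only [Matrix.of_apply, Matrix.cons_val', Matrix.cons_val_zero, Matrix.cons_val_one,
    Matrix.cons_val_fin_one]
  ring

lemma U_succ_sq_sub (a b : ℤ) (k : ℕ) :
    U a b (k + 1) ^ 2 - a * U a b k * U a b (k + 1) - b * U a b k ^ 2 = (-b) ^ k := by
  have h := congrArg Matrix.det (companion_pow a b k)
  rw [Matrix.det_pow, Matrix.det_fin_two_of, companion, Matrix.det_fin_two_of] at h
  linear_combination -h

lemma U_mul_eq_sum (a b : ℤ) (d k : ℕ) :
    U a b (d * k) = ∑ i ∈ Finset.range (k + 1),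
      U a b d ^ i * (U a b (d + 1) - a * U a b d) ^ (k - i) * k.choose i * U a b i := by
  rw [U_eq_companion_pow, pow_mul, companion_pow_eq_smul_add,
    ((Commute.one_right _).smul_right _).add_pow, Matrix.sum_apply]
  refine Finset.sum_congr rfl fun i _ => ?_
  simp only [smul_pow, one_pow, mul_smul_comm, mul_one, ← nsmul_eq_mul', Matrix.smul_apply,
    smul_eq_mul, nsmul_eq_mul, ← U_eq_companion_pow]
  ring

lemma V_eq (a b : ℤ) (k : ℕ) : V a b k = 2 * U a b (k + 1) - a * U a b k := by
  induction k using Nat.twoStepInduction with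
  | zero => simp [U, V]
  | one => simp only [U, V]; ring
  | more k ih₁ ih₂ => rw [V, ih₁, ih₂]; simp only [U]; ring

lemma U_two_mul (a b : ℤ) (k : ℕ) : U a b (2 * k) = U a b k * V a b k := by
  rw [two_mul, U_add, V_eq]
  ring

lemma V_two_mul (a b : ℤ) (k : ℕ) : V a b (2 * k) = V a b k ^ 2 - 2 * (-b) ^ k := by
  rw [V_eq, U_two_mul, two_mul k, add_assoc, U_add, V_eq, ← U_succ_sq_sub a b k, U]
  ring

lemma two_mul_U_succ (a b : ℤ) (k : ℕ) : 2 * U a b (k + 1) = a * U a b k + V a b k := by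
  rw [V_eq]
  ring

lemma two_mul_V_succ (a b : ℤ) (k : ℕ) :
    2 * V a b (k + 1) = a * V a b k + (a ^ 2 + 4 * b) * U a b k := by
  rw [V_eq, V_eq, U]
  ring

section Divisibility

variable {a b : ℤ}

lemma U_dvd_U_of_dvd {i j : ℕ} (h : i ∣ j) : U a b i ∣ U a b j := by
  obtain ⟨k, rfl⟩ := h
  rw [U_mul_eq_sum]
  refine Finset.dvd_sum fun m _ => ?_
  rcases m with _ | m
  · simp [U]
  · exact (((dvd_pow_self _ m.succ_ne_zero).mul_right _).mul_right _).mul_right _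

lemma isCoprime_U_succ_right (hab : IsCoprime a b) (k : ℕ) : IsCoprime (U a b (k + 1)) b := by
  induction k with
  | zero => simpa [U] using isCoprime_one_left
  | succ k ih => rw [U]; exact IsCoprime.add_mul_left_left_iff.2 (hab.mul_left ih)

lemma isCoprime_U_succ (hab : IsCoprime a b) (k : ℕ) : IsCoprime (U a b k) (U a b (k + 1)) := by
  induction k with
  | zero => simpa [U] using isCoprime_one_right
  | succ k ih =>
    rw [U, add_comm (a * _), mul_comm a]
    exact IsCoprime.add_mul_left_right_iff.2 ((isCoprime_U_succ_right hab k).mul_right ih.symm)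

lemma dvd_U_add_iff (hab : IsCoprime a b) {x : ℤ} {i j : ℕ} (hi : x ∣ U a b i) :
    x ∣ U a b (i + j) ↔ x ∣ U a b j := by
  have hx : IsCoprime x (U a b (i + 1)) := (isCoprime_U_succ hab i).of_isCoprime_of_dvd_left hi
  rw [U_add, dvd_add_right (hi.mul_right _)]
  exact ⟨hx.dvd_of_dvd_mul_left, fun h => h.mul_left _⟩

lemma dvd_U_gcd (hab : IsCoprime a b) {x : ℤ} {i j : ℕ} (hi : x ∣ U a b i) (hj : x ∣ U a b j) :
    x ∣ U a b (i.gcd j) := by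
  induction i, j using Nat.gcd.induction with
  | H0 j => rwa [Nat.gcd_zero_left]
  | H1 i j _ ih =>
    rw [Nat.gcd_rec]
    refine ih ?_ hi
    rw [← Nat.div_add_mod j i] at hj
    exact (dvd_U_add_iff hab (hi.trans (U_dvd_U_of_dvd (dvd_mul_right i _)))).1 hj

lemma gcd_U (hab : IsCoprime a b) (i j : ℕ) :
    (U a b i).gcd (U a b j) = (U a b (i.gcd j)).natAbs := by
  refine Nat.dvd_antisymm ?_ ?_
  · exact Int.natCast_dvd.1 (dvd_U_gcd hab (Int.gcd_dvd_left ..) (Int.gcd_dvd_right ..))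
  · exact Int.dvd_gcd (Int.natAbs_dvd.2 (U_dvd_U_of_dvd (Nat.gcd_dvd_left i j)))
      (Int.natAbs_dvd.2 (U_dvd_U_of_dvd (Nat.gcd_dvd_right i j)))

lemma dvd_U_mul_sub {m : ℤ} {d k : ℕ}
    (hm : ∀ i, 2 ≤ i → i ≤ k → m ∣ U a b d ^ i * k.choose i) :
    m ∣ U a b (d * k) - U a b d * (k * (U a b (d + 1) - a * U a b d) ^ (k - 1)) := by
  rcases k with _ | k
  · simp [U]
  rw [U_mul_eq_sum, Finset.sum_range_succ', Finset.sum_range_succ']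
  have htail : m ∣ ∑ i ∈ Finset.range k, U a b d ^ (i + 1 + 1) *
      (U a b (d + 1) - a * U a b d) ^ (k + 1 - (i + 1 + 1)) * (k + 1).choose (i + 1 + 1) *
      U a b (i + 1 + 1) := by
    refine Finset.dvd_sum fun i hi => ?_
    rw [mul_right_comm (U a b d ^ _)]
    have hik : i + 1 + 1 ≤ k + 1 := Nat.succ_le_succ (Finset.mem_range.1 hi)
    exact ((hm (i + 1 + 1) (by omega) hik).mul_right _).mul_right _
  convert htail using 1
  simp only [U, zero_add, pow_zero, pow_one, tsub_zero, add_tsub_cancel_right,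
    Nat.choose_zero_right, Nat.choose_one_right, mul_one, one_mul, mul_zero, add_zero]
  ring

end Divisibility

section Growth

variable {a b : ℤ}

lemma U_nonneg_and_V_pos (ha : 0 < a) (hΔ : 0 < a ^ 2 + 4 * b) (k : ℕ) :
    0 ≤ U a b k ∧ 0 < V a b k := by
  induction k with
  | zero => simp [U, V]
  | succ k ih =>
    obtain ⟨hU, hV⟩ := ih
    have hU' : 0 ≤ 2 * U a b (k + 1) := by rw [two_mul_U_succ]; positivity
    have hV' : 0 < 2 * V a b (k + 1) := by rw [two_mul_V_succ]; positivity
    constructor <;> linarith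

lemma V_pos (ha : 0 < a) (hΔ : 0 < a ^ 2 + 4 * b) (k : ℕ) : 0 < V a b k :=
  (U_nonneg_and_V_pos ha hΔ k).2

lemma U_pos (ha : 0 < a) (hΔ : 0 < a ^ 2 + 4 * b) {k : ℕ} (hk : 0 < k) : 0 < U a b k := by
  obtain ⟨k, rfl⟩ := Nat.exists_eq_succ_of_ne_zero hk.ne'
  obtain ⟨hU, hV⟩ := U_nonneg_and_V_pos ha hΔ k
  have h : 0 < 2 * U a b (k + 1) := by rw [two_mul_U_succ]; positivity
  linarith

lemma U_lt_U_succ (ha : 0 < a) (hΔ : 0 < a ^ 2 + 4 * b) (hb : b ≠ 0) {k : ℕ} (hk : 2 ≤ k) :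
    U a b k < U a b (k + 1) := by
  rcases (show 1 ≤ a from ha).eq_or_lt with rfl | ha'
  · have hb' : 0 < b := by omega
    obtain ⟨j, rfl⟩ := Nat.exists_eq_add_of_le' hk
    have : 0 < b * U 1 b (j + 1) := mul_pos hb' (U_pos ha hΔ j.succ_pos)
    calc
      U 1 b (j + 2) < U 1 b (j + 2) + b * U 1 b (j + 1) := lt_add_of_pos_right _ this
      _ = 1 * U 1 b (j + 2) + b * U 1 b (j + 1) := by rw [one_mul]
      _ = U 1 b (j + 2 + 1) := rfl
  · nlinarith [two_mul_U_succ a b k, V_pos ha hΔ k, U_nonneg_and_V_pos ha hΔ k]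

lemma U_lt_U (ha : 0 < a) (hΔ : 0 < a ^ 2 + 4 * b) (hb : b ≠ 0) {i j : ℕ} (hj : 3 ≤ j)
    (hij : i < j) : U a b i < U a b j := by
  have hmono : StrictMonoOn (U a b) (Set.Ici 2) :=
    strictMonoOn_of_lt_add_one Set.ordConnected_Ici fun k _ hk _ => U_lt_U_succ ha hΔ hb hk
  have h2j : U a b 2 < U a b j := hmono Set.self_mem_Ici (Set.mem_Ici.2 (by omega)) hj
  rcases i with _ | _ | i
  · exact U_pos ha hΔ (by omega)
  · exact (show U a b 1 ≤ U a b 2 from U_pos ha hΔ two_pos).trans_lt h2j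
  · exact hmono (Set.mem_Ici.2 (by omega)) (Set.mem_Ici.2 (by omega)) hij

lemma dvd_of_U_dvd_U (hab : IsCoprime a b) (ha : 0 < a) (hΔ : 0 < a ^ 2 + 4 * b) (hb : b ≠ 0)
    {i j : ℕ} (hi : 3 ≤ i) (h : U a b i ∣ U a b j) : i ∣ j := by
  have hpos : 0 < U a b (i.gcd j) := U_pos ha hΔ (Nat.gcd_pos_of_pos_left j (by omega))
  have hle : U a b i ≤ U a b (i.gcd j) := Int.le_of_dvd hpos (dvd_U_gcd hab dvd_rfl h)
  have hgcd : ¬ i.gcd j < i := fun hlt => hle.not_gt (U_lt_U ha hΔ hb hi hlt)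
  exact Nat.gcd_eq_left_iff_dvd.1 ((Nat.gcd_le_left j (by omega)).eq_of_not_lt hgcd)

end Growth

section Valuation

variable {a b : ℤ} {q : ℕ} [hq : Fact q.Prime]

lemma padicValInt_mul_of_not_dvd {x y : ℤ} (hy : ¬ (q : ℤ) ∣ y) :
    padicValInt q (x * y) = padicValInt q x := by
  rcases eq_or_ne x 0 with rfl | hx
  · simp
  have hy0 : y ≠ 0 := fun h => hy (h ▸ dvd_zero _)
  rw [padicValInt.mul hx hy0, padicValInt.eq_zero_of_not_dvd hy, add_zero]

lemma padicValInt_le_of_dvd {x y : ℤ} (hy : y ≠ 0) (h : x ∣ y) :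
    padicValInt q x ≤ padicValInt q y :=
  ((padicValInt_dvd_iff _ y).1 ((padicValInt_dvd x).trans h)).resolve_left hy

lemma padicValInt_gcd {x y : ℤ} (hx : x ≠ 0) (hy : y ≠ 0) :
    padicValInt q (x.gcd y) = min (padicValInt q x) (padicValInt q y) := by
  have := DFunLike.congr_fun (Nat.factorization_gcd (Int.natAbs_ne_zero.2 hx)
    (Int.natAbs_ne_zero.2 hy)) q
  simpa [Nat.factorization_def _ hq.out, padicValInt, Int.gcd] using this

lemma not_dvd_U_succ (hab : IsCoprime a b) {d : ℕ} (h : (q : ℤ) ∣ U a b d) :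
    ¬ (q : ℤ) ∣ U a b (d + 1) := fun h' =>
  (Nat.prime_iff_prime_int.1 hq.out).not_isUnit ((isCoprime_U_succ hab d).isUnit_of_dvd' h h')

lemma not_dvd_U_succ_sub_pow (hab : IsCoprime a b) {d : ℕ} (h : (q : ℤ) ∣ U a b d) (k : ℕ) :
    ¬ (q : ℤ) ∣ (U a b (d + 1) - a * U a b d) ^ k := by
  intro hdvd
  have hsub := (Nat.prime_iff_prime_int.1 hq.out).dvd_of_dvd_pow hdvd
  exact not_dvd_U_succ hab h ((dvd_sub_left (h.mul_left a)).1 hsub)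

lemma two_dvd_V_of_two_dvd_U {k : ℕ} (h : (2 : ℤ) ∣ U a b k) : (2 : ℤ) ∣ V a b k := by
  rw [V_eq]
  exact dvd_sub (dvd_mul_right _ _) (h.mul_left a)

lemma eq_two_of_dvd_U_of_dvd_V (hab : IsCoprime a b) {k : ℕ} (hU : (q : ℤ) ∣ U a b k)
    (hV : (q : ℤ) ∣ V a b k) : q = 2 := by
  rw [V_eq, dvd_sub_left (hU.mul_left a)] at hV
  have h2 : (q : ℤ) ∣ 2 := ((Nat.prime_iff_prime_int.1 hq.out).dvd_or_dvd hV).resolve_right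
    (not_dvd_U_succ hab hU)
  exact (Nat.prime_dvd_prime_iff_eq hq.out Nat.prime_two).1 (by exact_mod_cast h2)

lemma padicValInt_two_V_two_mul (hab : IsCoprime a b) {e : ℕ} (he : 0 < e)
    (h : (2 : ℤ) ∣ U a b (2 * e)) : padicValInt 2 (V a b (2 * e)) = 1 := by
  have hb : ¬ (2 : ℤ) ∣ b := fun hb => by
    obtain ⟨k, hk⟩ := Nat.exists_eq_succ_of_ne_zero (show 2 * e ≠ 0 by omega)
    rw [hk] at h
    exact Int.prime_two.not_isUnit ((isCoprime_U_succ_right hab k).isUnit_of_dvd' h hb)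
  obtain ⟨v, hv⟩ : (2 : ℤ) ∣ V a b e := by
    have hV := two_dvd_V_of_two_dvd_U h
    rw [V_two_mul, dvd_sub_left (dvd_mul_right _ _)] at hV
    exact Int.prime_two.dvd_of_dvd_pow hV
  have hodd : ¬ (2 : ℤ) ∣ 2 * v ^ 2 - (-b) ^ e := by
    rw [dvd_sub_right (dvd_mul_right _ _)]
    exact fun h => hb (by simpa using Int.prime_two.dvd_of_dvd_pow h)
  have hfac : V a b (2 * e) = (2 : ℕ) * (2 * v ^ 2 - (-b) ^ e) := by
    rw [V_two_mul, hv]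
    push_cast
    ring
  rw [hfac, padicValInt_mul_of_not_dvd (mod_cast hodd), padicValInt_self]

lemma padicValInt_U_mul_of_not_dvd (hab : IsCoprime a b) {d k : ℕ} (h : (q : ℤ) ∣ U a b d)
    (hk : ¬ q ∣ k) : padicValInt q (U a b (d * k)) = padicValInt q (U a b d) := by
  obtain ⟨z, hz⟩ : U a b d ^ 2 ∣ U a b (d * k) - _ :=
    dvd_U_mul_sub fun i hi _ => (pow_dvd_pow _ hi).mul_right _
  set c := (U a b (d + 1) - a * U a b d) ^ (k - 1)
  have hfac : U a b (d * k) = U a b d * (k * c + U a b d * z) := by linear_combination hz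
  have hndvd : ¬ (q : ℤ) ∣ k * c + U a b d * z := by
    rw [dvd_add_left (h.mul_right z), (Nat.prime_iff_prime_int.1 hq.out).dvd_mul, not_or]
    exact ⟨mod_cast hk, not_dvd_U_succ_sub_pow hab h _⟩
  rw [hfac, padicValInt_mul_of_not_dvd hndvd]

lemma padicValInt_U_mul_self_of_odd (hab : IsCoprime a b) {d : ℕ} (h : (q : ℤ) ∣ U a b d)
    (hU : U a b d ≠ 0) (hq2 : q ≠ 2) :
    padicValInt q (U a b (d * q)) = padicValInt q (U a b d) + 1 := by
  have hdvd (i : ℕ) (hi : 2 ≤ i) (hiq : i ≤ q) :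
      U a b d * q ^ 2 ∣ U a b d ^ i * q.choose i := by
    rcases hiq.lt_or_eq with hlt | rfl
    · have hchoose : (q : ℤ) ∣ q.choose i := mod_cast hq.out.dvd_choose_self (by omega) hlt
      calc U a b d * q ^ 2 = U a b d * q * q := by ring
        _ ∣ U a b d ^ 2 * q.choose i := sq (U a b d) ▸ mul_dvd_mul (mul_dvd_mul_left _ h) hchoose
        _ ∣ U a b d ^ i * q.choose i := mul_dvd_mul_right (pow_dvd_pow _ hi) _
    · calc U a b d * i ^ 2 ∣ U a b d * U a b d ^ 2 := mul_dvd_mul_left _ (pow_dvd_pow_of_dvd h 2)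
        _ = U a b d ^ 3 := (pow_succ' _ 2).symm
        _ ∣ U a b d ^ i * i.choose i := (pow_dvd_pow _ (by omega)).mul_right _
  obtain ⟨z, hz⟩ := dvd_U_mul_sub hdvd
  set c := (U a b (d + 1) - a * U a b d) ^ (q - 1)
  have hfac : U a b (d * q) = U a b d * q * (c + q * z) := by linear_combination hz
  have hndvd : ¬ (q : ℤ) ∣ c + q * z := by
    rw [dvd_add_left (dvd_mul_right _ _)]
    exact not_dvd_U_succ_sub_pow hab h _
  rw [hfac, padicValInt_mul_of_not_dvd hndvd, padicValInt_mul_eq_succ _ hU]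

lemma padicValInt_two_U_mul_two (hab : IsCoprime a b) {d : ℕ} (hd : Even d)
    (h : (2 : ℤ) ∣ U a b d) (hU : U a b d ≠ 0) :
    padicValInt 2 (U a b (d * 2)) = padicValInt 2 (U a b d) + 1 := by
  obtain ⟨e, rfl⟩ := hd.two_dvd
  have he : 0 < e := Nat.pos_of_ne_zero fun he => hU (by simp [he, U])
  have hV : padicValInt 2 (V a b (2 * e)) = 1 := padicValInt_two_V_two_mul hab he h
  have hV0 : V a b (2 * e) ≠ 0 := fun h0 => by simp [h0] at hV
  rw [mul_comm, U_two_mul, padicValInt.mul hU hV0, hV]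

-- The parity condition is essential: `v₂ (U_6) = 3` but `v₂ (U_3) = 1` for the Fibonacci numbers.
lemma padicValInt_U_mul (hab : IsCoprime a b) {d k : ℕ} (h : (q : ℤ) ∣ U a b d)
    (hU : U a b (d * k) ≠ 0) (hpar : q = 2 → Even d ∨ Odd k) :
    padicValInt q (U a b (d * k)) = padicValInt q (U a b d) + padicValNat q k := by
  induction k using Nat.strong_induction_on with
  | _ k ih =>
    by_cases hqk : q ∣ k
    · obtain ⟨l, rfl⟩ := hqk
      rw [show d * (q * l) = d * l * q by ring] at hU ⊢
      have hUl : U a b (d * l) ≠ 0 := ne_zero_of_dvd_ne_zero hU (U_dvd_U_of_dvd (dvd_mul_right ..))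
      have hl : l ≠ 0 := fun hl => hUl (by simp [hl, U])
      have hql : (q : ℤ) ∣ U a b (d * l) := h.trans (U_dvd_U_of_dvd (dvd_mul_right d l))
      have heven : q = 2 → Even d := fun h2 => (hpar h2).resolve_right (by simp [h2])
      have hlift : padicValInt q (U a b (d * l * q)) = padicValInt q (U a b (d * l)) + 1 := by
        rcases eq_or_ne q 2 with rfl | hq2
        · exact padicValInt_two_U_mul_two hab ((heven rfl).mul_right l) hql hUl
        · exact padicValInt_U_mul_self_of_odd hab hql hUl hq2
      rw [hlift, ih l (lt_mul_of_one_lt_left (by omega) hq.out.one_lt) hUl (.inl ∘ heven),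
        padicValNat.mul hq.out.ne_zero hl, padicValNat_self]
      ring
    · rw [padicValInt_U_mul_of_not_dvd hab h hqk, padicValNat.eq_zero_of_not_dvd hqk, add_zero]

lemma padicValInt_U_gcd (hab : IsCoprime a b) {i j : ℕ} (hi : U a b i ≠ 0) (hj : U a b j ≠ 0) :
    padicValInt q (U a b (i.gcd j)) = min (padicValInt q (U a b i)) (padicValInt q (U a b j)) := by
  rw [← padicValInt_gcd hi hj, gcd_U hab, padicValInt.of_nat, padicValInt]

end Valuation

lemma dvd_iff_forall_padicValInt_le {x y : ℤ} (hx : x ≠ 0) (hy : y ≠ 0) :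
    x ∣ y ↔ ∀ q : ℕ, q.Prime → padicValInt q x ≤ padicValInt q y := by
  rw [← Int.natAbs_dvd_natAbs, ← Nat.factorization_prime_le_iff_dvd (Int.natAbs_ne_zero.2 hx)
    (Int.natAbs_ne_zero.2 hy)]
  refine forall₂_congr fun q hq => ?_
  rw [Nat.factorization_def _ hq, Nat.factorization_def _ hq, padicValInt, padicValInt]

section Triple

variable {a b : ℤ} {p h : ℕ}

lemma padicValInt_U_two_mul_mul {q : ℕ} [Fact q.Prime] (hab : IsCoprime a b) {k : ℕ}
    (hU : U a b (2 * p * k) ≠ 0) (hq : (q : ℤ) ∣ U a b (2 * p)) :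
    padicValInt q (U a b (2 * p * k)) =
      padicValInt q (U a b p) + padicValInt q (V a b p) + padicValNat q k := by
  have hUV : U a b p * V a b p ≠ 0 := by
    rw [← U_two_mul]
    exact ne_zero_of_dvd_ne_zero hU (U_dvd_U_of_dvd (dvd_mul_right ..))
  rw [padicValInt_U_mul hab hq hU fun _ => .inl (even_two_mul p), U_two_mul,
    padicValInt.mul (left_ne_zero_of_mul hUV) (right_ne_zero_of_mul hUV)]

lemma padicValInt_U_triple {q : ℕ} [Fact q.Prime] (hab : IsCoprime a b)
    (hU : ∀ k, 0 < k → U a b k ≠ 0) (hp : 0 < p) (hh : 0 < h) :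
    padicValInt q (U a b (2 * p * h) * U a b (p * (2 * h + 1)) * U a b (2 * p * (h + 1))) =
      padicValInt q (U a b p ^ 2 * V a b p) +
        max (padicValInt q (U a b (2 * p * h))) (max (padicValInt q (U a b (p * (2 * h + 1))))
          (padicValInt q (U a b (2 * p * (h + 1))))) := by
  have hU₁ : U a b (2 * p * h) ≠ 0 := hU _ (by positivity)
  have hU₂ : U a b (p * (2 * h + 1)) ≠ 0 := hU _ (by positivity)
  have hU₃ : U a b (2 * p * (h + 1)) ≠ 0 := hU _ (by positivity)
  have hUV : U a b p * V a b p ≠ 0 := U_two_mul a b p ▸ hU _ (by positivity)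
  have hUp := left_ne_zero_of_mul hUV
  have hVp := right_ne_zero_of_mul hUV
  have hgcd₁₂ : (2 * p * h).gcd (p * (2 * h + 1)) = p := by
    rw [mul_comm 2 p, mul_assoc, Nat.gcd_mul_left]
    simp
  have hgcd₂₃ : (p * (2 * h + 1)).gcd (2 * p * (h + 1)) = p := by
    rw [mul_comm 2 p, mul_assoc, Nat.gcd_mul_left, show 2 * (h + 1) = 2 * h + 1 + 1 by ring]
    simp
  have hgcd₁₃ : (2 * p * h).gcd (2 * p * (h + 1)) = 2 * p := by simp [Nat.gcd_mul_left]
  have hmin₁₂ := padicValInt_U_gcd (q := q) hab hU₁ hU₂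
  have hmin₂₃ := padicValInt_U_gcd (q := q) hab hU₂ hU₃
  have hmin₁₃ := padicValInt_U_gcd (q := q) hab hU₁ hU₃
  rw [hgcd₁₂] at hmin₁₂
  rw [hgcd₂₃] at hmin₂₃
  rw [hgcd₁₃, U_two_mul, padicValInt.mul hUp hVp] at hmin₁₃
  rw [padicValInt.mul (mul_ne_zero hU₁ hU₂) hU₃, padicValInt.mul hU₁ hU₂, sq,
    padicValInt.mul (mul_ne_zero hUp hUp) hVp, padicValInt.mul hUp hUp]
  omega

lemma padicValInt_U_triple_le_of_not_dvd {q : ℕ} [Fact q.Prime] (hab : IsCoprime a b)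
    (hU : ∀ k, 0 < k → U a b k ≠ 0) (hp : 0 < p) (hh : 0 < h)
    (hq : ¬ (q : ℤ) ∣ U a b p ^ 2 * V a b p) {k : ℕ} (hk : 0 < k)
    (hdvd : 2 * p * (h * (h + 1) * (2 * h + 1)) ∣ k) :
    padicValInt q (U a b (2 * p * h) * U a b (p * (2 * h + 1)) * U a b (2 * p * (h + 1))) ≤
      padicValInt q (U a b k) := by
  have hle {i : ℕ} (hi : i ∣ 2 * p * (h * (h + 1) * (2 * h + 1))) :
      padicValInt q (U a b i) ≤ padicValInt q (U a b k) :=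
    padicValInt_le_of_dvd (hU k hk) (U_dvd_U_of_dvd (hi.trans hdvd))
  rw [padicValInt_U_triple hab hU hp hh, padicValInt.eq_zero_of_not_dvd hq, zero_add]
  exact max_le (hle ⟨(h + 1) * (2 * h + 1), by ring⟩)
    (max_le (hle ⟨2 * h * (h + 1), by ring⟩) (hle ⟨h * (2 * h + 1), by ring⟩))

lemma padicValInt_U_mul_odd {q : ℕ} [Fact q.Prime] (hab : IsCoprime a b)
    (hU : U a b (p * (2 * h + 1)) ≠ 0) (hq : (q : ℤ) ∣ U a b (2 * p)) :
    padicValInt q (U a b (p * (2 * h + 1))) =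
      if (q : ℤ) ∣ U a b p then padicValInt q (U a b p) + padicValNat q (2 * h + 1) else 0 := by
  split_ifs with hqU
  · exact padicValInt_U_mul hab hqU hU fun _ => .inr (odd_two_mul_add_one h)
  · have hgcd : (2 * p).gcd (p * (2 * h + 1)) = p := by
      rw [mul_comm 2 p, Nat.gcd_mul_left]
      simp
    exact padicValInt.eq_zero_of_not_dvd fun hdvd => hqU (hgcd ▸ dvd_U_gcd hab hq hdvd)

lemma not_dvd_gcd_V_of_dvd_U {q : ℕ} [hq : Fact q.Prime] (hab : IsCoprime a b)
    (hqU : (q : ℤ) ∣ U a b p) : ¬ (q : ℤ) ∣ (V a b p).gcd (2 * h + 1 : ℕ) := by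
  intro hdvd
  obtain rfl := eq_two_of_dvd_U_of_dvd_V hab hqU (hdvd.trans (Int.gcd_dvd_left ..))
  have h2 : 2 ∣ 2 * h + 1 := by exact_mod_cast hdvd.trans (Int.gcd_dvd_right ..)
  omega

lemma padicValInt_U_triple_le_iff_of_dvd {q : ℕ} [Fact q.Prime] (hab : IsCoprime a b)
    (hU : ∀ k, 0 < k → U a b k ≠ 0) (hp : 0 < p) (hh : 0 < h)
    (hq : (q : ℤ) ∣ U a b (2 * p)) {s : ℕ} (hs : 0 < s) :
    padicValInt q (U a b (2 * p * h) * U a b (p * (2 * h + 1)) * U a b (2 * p * (h + 1))) ≤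
        padicValInt q (U a b (2 * p * (h * (h + 1) * (2 * h + 1)) * s)) ↔
      padicValInt q (U a b p ^ 2 * V a b p) ≤
        padicValInt q ((V a b p).gcd (2 * h + 1 : ℕ) * s : ℤ) := by
  have hUV : U a b p * V a b p ≠ 0 := U_two_mul a b p ▸ hU _ (by positivity)
  have hUp := left_ne_zero_of_mul hUV
  have hVp := right_ne_zero_of_mul hUV
  have hg : ((V a b p).gcd (2 * h + 1 : ℕ) : ℤ) ≠ 0 := mod_cast Int.gcd_ne_zero_left hVp
  have hgcd := padicValInt_gcd (q := q) hVp (by positivity : ((2 * h + 1 : ℕ) : ℤ) ≠ 0)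
  rw [padicValInt.of_nat (n := 2 * h + 1)] at hgcd
  have hU₁ : U a b (2 * p * h) ≠ 0 := hU _ (by positivity)
  have hU₂ : U a b (p * (2 * h + 1)) ≠ 0 := hU _ (by positivity)
  have hU₃ : U a b (2 * p * (h + 1)) ≠ 0 := hU _ (by positivity)
  have hUL : U a b (2 * p * (h * (h + 1) * (2 * h + 1) * s)) ≠ 0 := hU _ (by positivity)
  rw [padicValInt.mul (mul_ne_zero hU₁ hU₂) hU₃, padicValInt.mul hU₁ hU₂,
    padicValInt_U_two_mul_mul hab hU₁ hq, padicValInt_U_mul_odd hab hU₂ hq,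
    padicValInt_U_two_mul_mul hab hU₃ hq, mul_assoc (2 * p), padicValInt_U_two_mul_mul hab hUL hq,
    padicValNat.mul (by positivity) hs.ne', padicValNat.mul (by positivity) (by positivity),
    padicValNat.mul hh.ne' (by positivity), sq, padicValInt.mul (mul_ne_zero hUp hUp) hVp,
    padicValInt.mul hUp hUp, padicValInt.mul hg (mod_cast hs.ne'), padicValInt.of_nat (n := s)]
  split_ifs with hqU
  · have hzero := padicValInt.eq_zero_of_not_dvd (not_dvd_gcd_V_of_dvd_U (h := h) hab hqU)
    omega
  · have hzero := padicValInt.eq_zero_of_not_dvd hqU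
    omega

lemma padicValInt_U_triple_le_iff {q : ℕ} [hq : Fact q.Prime] (hab : IsCoprime a b)
    (hU : ∀ k, 0 < k → U a b k ≠ 0) (hp : 0 < p) (hh : 0 < h) {s : ℕ} (hs : 0 < s) :
    padicValInt q (U a b (2 * p * h) * U a b (p * (2 * h + 1)) * U a b (2 * p * (h + 1))) ≤
        padicValInt q (U a b (2 * p * (h * (h + 1) * (2 * h + 1)) * s)) ↔
      padicValInt q (U a b p ^ 2 * V a b p) ≤
        padicValInt q ((V a b p).gcd (2 * h + 1 : ℕ) * s : ℤ) := by
  by_cases hdvd : (q : ℤ) ∣ U a b (2 * p)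
  · exact padicValInt_U_triple_le_iff_of_dvd hab hU hp hh hdvd hs
  have hndvd : ¬ (q : ℤ) ∣ U a b p ^ 2 * V a b p := by
    rw [sq, mul_assoc, ← U_two_mul, (Nat.prime_iff_prime_int.1 hq.out).dvd_mul, not_or]
    exact ⟨fun hqU => hdvd (hqU.trans (U_dvd_U_of_dvd (dvd_mul_left p 2))), hdvd⟩
  have hle := padicValInt_U_triple_le_of_not_dvd hab hU hp hh hndvd
    (k := 2 * p * (h * (h + 1) * (2 * h + 1)) * s) (by positivity) (dvd_mul_right ..)
  exact iff_of_true hle (by simp [padicValInt.eq_zero_of_not_dvd hndvd])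

lemma U_triple_dvd_U_iff (hab : IsCoprime a b) (hU : ∀ k, 0 < k → U a b k ≠ 0) (hp : 0 < p)
    (hh : 0 < h) {s : ℕ} (hs : 0 < s) :
    U a b (2 * p * h) * U a b (p * (2 * h + 1)) * U a b (2 * p * (h + 1)) ∣
        U a b (2 * p * (h * (h + 1) * (2 * h + 1)) * s) ↔
      U a b p ^ 2 * V a b p ∣ (V a b p).gcd (2 * h + 1 : ℕ) * s := by
  have hUV : U a b p * V a b p ≠ 0 := U_two_mul a b p ▸ hU _ (by positivity)
  have hg : (V a b p).gcd (2 * h + 1 : ℕ) ≠ 0 := Int.gcd_ne_zero_left (right_ne_zero_of_mul hUV)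
  rw [dvd_iff_forall_padicValInt_le (mul_ne_zero (mul_ne_zero (hU _ (by positivity))
      (hU _ (by positivity))) (hU _ (by positivity))) (hU _ (by positivity)),
    dvd_iff_forall_padicValInt_le (mul_ne_zero (pow_ne_zero 2 (left_ne_zero_of_mul hUV))
      (right_ne_zero_of_mul hUV)) (mul_ne_zero (mod_cast hg) (mod_cast hs.ne'))]
  refine forall₂_congr fun q hq => ?_
  have := Fact.mk hq
  exact padicValInt_U_triple_le_iff hab hU hp hh hs

lemma two_mul_consecutive_mul_dvd_of_dvd {l : ℕ} (h₁ : 2 * h ∣ l) (h₂ : 2 * h + 1 ∣ l)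
    (h₃ : 2 * (h + 1) ∣ l) : 2 * (h * (h + 1) * (2 * h + 1)) ∣ l := by
  obtain ⟨m, rfl⟩ : 2 ∣ l := (dvd_mul_right 2 h).trans h₁
  rw [Nat.mul_dvd_mul_iff_left two_pos] at h₁ h₃ ⊢
  have hcop₂ : (2 * h + 1).Coprime 2 := by simp
  have hcop₁ : h.Coprime (2 * h + 1) := by simp
  have hcop₃ : (h + 1).Coprime (2 * h + 1) := by
    rw [show 2 * h + 1 = h + (h + 1) by ring]
    simp
  have hh : h.Coprime (h + 1) := by simp
  exact (hcop₁.mul_left hcop₃).mul_dvd_of_dvd_of_dvd (hh.mul_dvd_of_dvd_of_dvd h₁ h₃)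
    (hcop₂.dvd_of_dvd_mul_left h₂)

lemma mul_dvd_of_U_triple_dvd_U (hab : IsCoprime a b) (ha : 0 < a) (hΔ : 0 < a ^ 2 + 4 * b)
    (hb : b ≠ 0) (hp : 0 < p) (hh : 0 < h) {k : ℕ}
    (hk : U a b (2 * p * h) * U a b (p * (2 * h + 1)) * U a b (2 * p * (h + 1)) ∣ U a b k) :
    2 * p * (h * (h + 1) * (2 * h + 1)) ∣ k := by
  have hindex {i : ℕ} (hi : 3 ≤ i) : U a b i ∣ U a b k → i ∣ k :=
    dvd_of_U_dvd_U hab ha hΔ hb hi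
  have h₂ : p * (2 * h + 1) ∣ k :=
    hindex (by nlinarith) ((dvd_mul_left _ _).trans ((dvd_mul_right _ _).trans hk))
  have h₃ : 2 * p * (h + 1) ∣ k := hindex (by nlinarith) ((dvd_mul_left _ _).trans hk)
  have h₁ : 2 * p * h ∣ k := by
    rcases le_or_gt 3 (2 * p * h) with hi | hi
    · exact hindex hi ((dvd_mul_right _ _).trans ((dvd_mul_right _ _).trans hk))
    · obtain rfl : h = 1 := by nlinarith
      exact (mul_dvd_mul_left (2 * p) (one_dvd _)).trans h₃
  obtain ⟨l, rfl⟩ : p ∣ k := (dvd_mul_right p _).trans h₂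
  rw [mul_comm 2 p, mul_assoc, Nat.mul_dvd_mul_iff_left hp] at h₁ h₃ ⊢
  exact two_mul_consecutive_mul_dvd_of_dvd h₁ (Nat.dvd_of_mul_dvd_mul_left hp h₂) h₃

lemma tau_U_triple (hab : IsCoprime a b) (ha : 0 < a) (hΔ : 0 < a ^ 2 + 4 * b) (hb : b ≠ 0)
    (hp : 0 < p) (hh : 0 < h) {t : ℕ} (ht : 0 < t)
    (hgt : U a b p ^ 2 * V a b p = (V a b p).gcd (2 * h + 1 : ℕ) * t) :
    tau a b (U a b (2 * p * h) * U a b (p * (2 * h + 1)) * U a b (2 * p * (h + 1))) =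
      2 * p * (h * (h + 1) * (2 * h + 1)) * t := by
  have hg : ((V a b p).gcd (2 * h + 1 : ℕ) : ℤ) ≠ 0 :=
    mod_cast Int.gcd_ne_zero_left (V_pos ha hΔ p).ne'
  have hdvd_iff {s : ℕ} (hs : 0 < s) :
      U a b (2 * p * h) * U a b (p * (2 * h + 1)) * U a b (2 * p * (h + 1)) ∣
        U a b (2 * p * (h * (h + 1) * (2 * h + 1)) * s) ↔ t ∣ s := by
    rw [U_triple_dvd_U_iff hab (fun k hk => (U_pos ha hΔ hk).ne') hp hh hs, hgt,
      mul_dvd_mul_iff_left hg, Int.natCast_dvd_natCast]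
  refine IsLeast.csInf_eq ⟨⟨by positivity, (hdvd_iff ht).2 dvd_rfl⟩, ?_⟩
  rintro k ⟨hk, hdvd⟩
  obtain ⟨s, rfl⟩ := mul_dvd_of_U_triple_dvd_U hab ha hΔ hb hp hh hdvd
  have hs : 0 < s := Nat.pos_of_mul_pos_left hk
  exact Nat.mul_le_mul_left _ (Nat.le_of_dvd hs ((hdvd_iff hs).1 hdvd))

end Triple

theorem tau_triple_case4_general {a b : ℤ} (hab : IsCoprime a b) (ha : 0 < a)
    (hΔ : 0 < a ^ 2 + 4 * b) (hb : b ≠ 0) {n p : ℕ} (hn : 0 < n) (hp : 0 < p) (hpn : 2 * p ∣ n) :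
    (tau a b (U a b n * U a b (n + p) * U a b (n + 2 * p)) : ℤ) =
      ((n * (n + p) * (n + 2 * p) : ℤ) / (2 * p ^ 2 : ℕ)) *
        (U a b p ^ 2 * V a b p / (Int.gcd (V a b p) (((n + p) / p : ℕ) : ℤ) : ℤ)) := by
  obtain ⟨h, rfl⟩ := hpn
  have hh : 0 < h := Nat.pos_of_mul_pos_left hn
  have hnp : 2 * p * h + p = p * (2 * h + 1) := by ring
  have hprod : ((2 * p * h : ℕ) * ((2 * p * h : ℕ) + p) * ((2 * p * h : ℕ) + 2 * p) : ℤ) =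
      (2 * p ^ 2 : ℕ) * (2 * p * (h * (h + 1) * (2 * h + 1)) : ℕ) := by
    push_cast
    ring
  rw [hprod, Int.mul_ediv_cancel_left _ (by positivity), hnp, Nat.mul_div_cancel_left _ hp,
    show 2 * p * h + 2 * p = 2 * p * (h + 1) by ring]
  have hV : 0 < V a b p := V_pos ha hΔ p
  have hU : 0 < U a b p := U_pos ha hΔ hp
  have hg : (0 : ℤ) < (V a b p).gcd (2 * h + 1 : ℕ) := mod_cast Int.gcd_pos_of_ne_zero_left _ hV.ne'
  obtain ⟨t, hgt⟩ : ((V a b p).gcd (2 * h + 1 : ℕ) : ℤ) ∣ U a b p ^ 2 * V a b p :=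
    (Int.gcd_dvd_left ..).mul_left _
  have ht : 0 < t := pos_of_mul_pos_right (hgt ▸ by positivity) hg.le
  lift t to ℕ using ht.le
  rw [tau_U_triple hab ha hΔ hb hp hh (mod_cast ht) hgt, hgt, Int.mul_ediv_cancel_left _ hg.ne']
  push_cast
  rfl

theorem tau_triple_case4 (a b : ℤ) (hab : IsCoprime a b) (ha : 0 < a)
    (hΔ : 0 < a ^ 2 + 4 * b) (hnd : Nondegenerate a b)
    (n p : ℕ) (hn : 0 < n) (hp : p.Prime) (hp3 : 3 ≤ p)
    (hpn : p ∣ n) (heven : Even n) :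
    (tau a b (U a b n * U a b (n + p) * U a b (n + 2 * p)) : ℤ) =
      ((n * (n + p) * (n + 2 * p) : ℤ) / (2 * p ^ 2 : ℕ)) *
        (U a b p ^ 2 * V a b p / (Int.gcd (V a b p) (((n + p) / p : ℕ) : ℤ) : ℤ)) := by
  have hcop : Nat.Coprime 2 p := (Nat.coprime_primes Nat.prime_two hp).2 (by omega)
  exact tau_triple_case4_general hab ha hΔ hnd.1 hn hp.pos
    (hcop.mul_dvd_of_dvd_of_dvd heven.two_dvd hpn)
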